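/- Disjoint-annuli construction: Fix R ∈ ℕ and m ∈ ℕ. Then there exists a constant C(R,m), depending only on R and m, such that the following holds for every n ∈ ℕ (with κ the unique integer satisfying R^{κ−1} < n ≤ R^κ) and all integers i,j with i ≤ j − 10. Tile the box B(0,R^{−i}/2) (of side length R^{−i}) by translates of a box of side length n^{−1}R^{κ−j}, and let K be the set of centers of those tiles entirely contained in B(0,R^{−i}/2). For all distinct z₁,…,z_m ∈ K there exist integers n_u ∈ {1,…,m} (for 1 ≤ u ≤ m) and reals s_{u,l}, r_{u,l} with 0 < s_{u,l} < r_{u,l} ≤ n^{−1}R^{κ−i} for 1 ≤ l ≤ n_u−1 and 0 = s_{u,n_u} < (1/2)n^{−1}R^{κ−j} ≤ r_{u,n_u}, such that the annuli A(z_u; s_{u,l}, r_{u,l}) (1 ≤ u ≤ m, 1 ≤ l ≤ n_u) are pairwise disjoint and ∏_{u=1}^{m} (∏_{l=1}^{n_u−1} s_{u,l})/(∏_{l=1}^{n_u} r_{u,l}) ≤ C(R,m)·∏_{u=1}^{m} 1/min(R^{−i}, min_{1≤v<u} |z_u − z_v|), with the conventions that an empty product equals 1 and the minimum over an empty index set is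 +∞. -/

import Mathlib

/-!
# Disjoint annuli around tile centres

Write `ρ` for the side of a tile, `D = R^(-i)`, and use the sup distance `e` in triangular
coordinates, for which distinct tile centres are at distance at least `ρ`. Let
`d u = min (D, min_{v<u} e (z u, z v))`. Every annulus around `z u` is placed inside the box
`B(z u, d u / 2)`. For each later centre `z w` (`u < w`) the whole box `B(z w, d w / 2)` lies in the
annulus around `z u` with radii `e - d w / 2` and `e + d w / 2`, where `e = e (z u, z w)`. Removing
these ranges of radii from `[0, d u / 2)` leaves at most `m` intervals, which are the radii used at
`z u`; annuli around different centres are then disjoint.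

Since `d w ≤ e`, each removed range `(a, b)` satisfies `b ≤ 3 a`, so removing it costs at most a
factor `3` in the product of aspect ratios (`excise_intervals`). Hence the factor of `u` is at most
`3^m * 2 / d u`, and comparing the sup distance with the Euclidean one
(`dist_eucl_le`, `rmin_le_three_mul_supMin`) gives the claim with `C = (6 * 3^m)^m`.
-/

/-!
Self-contained formalization framework for critical site percolation on the
triangular lattice `T` (sites indexed by `ℤ × ℤ` in triangular coordinates),
following the conventions of the paper "The scaling limit of random walk and
the intrinsic metric on planar critical percolation".
-/

noncomputable section
open scoped ENNReal
open scoped Classical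

namespace Perco

/-! ## The lattice, the plane, and percolation configurations -/

/-- Adjacency in the triangular lattice `T` (lattice coordinates). -/
def Adj (u v : ℤ × ℤ) : Prop :=
  (u.1 - v.1, u.2 - v.2) ∈
    ([(1, 0), (-1, 0), (0, 1), (0, -1), (1, -1), (-1, 1)] : List (ℤ × ℤ))

/-- The Euclidean point (as a complex number) corresponding to the point `p`
given in triangular coordinates. -/
def eucl (p : ℝ × ℝ) : ℂ := ⟨p.1 + p.2 / 2, Real.sqrt 3 / 2 * p.2⟩

/-- The triangular coordinates of the site `v` of `T_n = n⁻¹ T`. -/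
def triPt (n : ℕ) (v : ℤ × ℤ) : ℝ × ℝ := ((v.1 : ℝ) / n, (v.2 : ℝ) / n)

/-- The Euclidean position of the site `v` of `T_n`. -/
def sitePt (n : ℕ) (v : ℤ × ℤ) : ℂ := eucl (triPt n v)

/-- The sites of the standard `s × s` lattice box (for the scale-`s` lattice
this is `Λ_s`, the set of sites of `T_s` lying in `[0,1)²`). -/
def lam (s : ℕ) : Set (ℤ × ℤ) :=
  {v | 0 ≤ v.1 ∧ v.1 < (s : ℤ) ∧ 0 ≤ v.2 ∧ v.2 < (s : ℤ)}

/-- Percolation configurations on `Λ_n`. -/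
abbrev Config (n : ℕ) := Fin n × Fin n → Bool

/-- The site colouring of `T_n` determined by a configuration on `Λ_n`
(`true` = open, `false` = closed; sites outside `Λ_n` are closed). -/
def cfg (n : ℕ) (c : Config n) (v : ℤ × ℤ) : Bool :=
  if h : 0 ≤ v.1 ∧ v.1 < (n : ℤ) ∧ 0 ≤ v.2 ∧ v.2 < (n : ℤ) then
    c (⟨v.1.toNat, by omega⟩, ⟨v.2.toNat, by omega⟩)
  else false

/-- The probability of an event under critical site percolation on `Λ_n`
(each of the `2^(n²)` configurations is equally likely). -/
def pr (n : ℕ) (E : ((ℤ × ℤ) → Bool) → Prop) : ℝ :=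
  (Nat.card {c : Config n // E (cfg n c)} : ℝ) / 2 ^ (n * n)

/-- The conditional probability `P(E | F)` under critical site percolation
on `Λ_n`. -/
def cpr (n : ℕ) (E F : ((ℤ × ℤ) → Bool) → Prop) : ℝ :=
  (Nat.card {c : Config n // E (cfg n c) ∧ F (cfg n c)} : ℝ) /
    (Nat.card {c : Config n // F (cfg n c)} : ℝ)

/-! ## Paths, connectivity and the two metrics -/

/-- A lattice path: a nonempty list of sites with consecutive sites adjacent. -/
def IsPath (γ : List (ℤ × ℤ)) : Prop := γ ≠ [] ∧ γ.Chain' Adj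

/-- `γ` is a lattice path from `x` to `y` all of whose sites lie in `S`. -/
def PathIn (S : Set (ℤ × ℤ)) (x y : ℤ × ℤ) (γ : List (ℤ × ℤ)) : Prop :=
  IsPath γ ∧ (∀ v ∈ γ, v ∈ S) ∧ γ.head? = some x ∧ γ.getLast? = some y

/-- `x` and `y` are joined by a lattice path inside `S`. -/
def Conn (S : Set (ℤ × ℤ)) (x y : ℤ × ℤ) : Prop := ∃ γ, PathIn S x y γ

/-- The sites of `S` having colour `b`. -/
def coloured (ω : (ℤ × ℤ) → Bool) (b : Bool) (S : Set (ℤ × ℤ)) : Set (ℤ × ℤ) :=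
  {v | v ∈ S ∧ ω v = b}

/-- The open sites of `S`. -/
def opens (ω : (ℤ × ℤ) → Bool) (S : Set (ℤ × ℤ)) : Set (ℤ × ℤ) := coloured ω true S

/-- The graph distance (`D^geo`, adjacent sites at distance `1`) on the
subgraph of `T_n` induced on `V`; `∞` if there is no connecting path. -/
def dGeo (V : Set (ℤ × ℤ)) (x y : ℤ × ℤ) : ℝ≥0∞ :=
  ⨅ γ ∈ {γ : List (ℤ × ℤ) | PathIn V x y γ}, ((γ.length : ℝ≥0∞) - 1)

/-- The Dirichlet energy `Σ_{{u,v} edge of V} (f u - f v)²` of `f` on the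
subgraph induced on `V` (each unordered edge counted once). -/
def energy (V : Set (ℤ × ℤ)) (f : ℤ × ℤ → ℝ) : ℝ≥0∞ :=
  (∑' u : V, ∑' v : V,
      if Adj (u : ℤ × ℤ) (v : ℤ × ℤ) then
        ENNReal.ofReal ((f (u : ℤ × ℤ) - f (v : ℤ × ℤ)) ^ 2)
      else 0) / 2

/-- The effective resistance `D^res` between `x` and `y` on the subgraph
induced on `V`: the inverse of the minimal energy of a potential with
`f x = 1`, `f y = 0`. -/
def dRes (V : Set (ℤ × ℤ)) (x y : ℤ × ℤ) : ℝ≥0∞ :=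
  (⨅ f ∈ {f : ℤ × ℤ → ℝ | f x = 1 ∧ f y = 0}, energy V f)⁻¹

/-- `D` is one of the two metrics considered: the graph distance or the
effective resistance. -/
def IsDist (D : Set (ℤ × ℤ) → ℤ × ℤ → ℤ × ℤ → ℝ≥0∞) : Prop := D = dGeo ∨ D = dRes

/-! ## The crossing event `E`, the observable `X`, and its quantiles -/

/-- Euclidean position of the midpoint of the top side of the unit box. -/
def cTop : ℂ := eucl (1 / 2, 1)
/-- Euclidean position of the midpoint of the right side of the unit box. -/
def cRight : ℂ := eucl (1, 1 / 2)
/-- Euclidean position of the midpoint of the bottom side of the unit box. -/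
def cBot : ℂ := eucl (1 / 2, 0)
/-- Euclidean position of the midpoint of the left side of the unit box. -/
def cLeft : ℂ := eucl (0, 1 / 2)

/-- A left-to-right crossing of colour `b` of the standard `s × s` box:
a colour-`b` path in the box from the leftmost to the rightmost column
(i.e. within one lattice spacing of the left resp. right side). -/
def LRCross (s : ℕ) (ω : (ℤ × ℤ) → Bool) (b : Bool) (γ : List (ℤ × ℤ)) : Prop :=
  IsPath γ ∧ (∀ v ∈ γ, v ∈ lam s ∧ ω v = b) ∧
    (∃ x, γ.head? = some x ∧ x.1 = 0) ∧ ∃ y, γ.getLast? = some y ∧ y.1 = (s : ℤ) - 1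

/-- The colour-`b` cluster of (the sites of) the path `γ` inside the standard
`s × s` box. -/
def clusterOf (s : ℕ) (ω : (ℤ × ℤ) → Bool) (b : Bool) (γ : List (ℤ × ℤ)) :
    Set (ℤ × ℤ) :=
  {v | ∃ x ∈ γ, Conn (coloured ω b (lam s)) x v}

/-- The conditions of the event `E` (with parameter `δ`) for a witnessing
triple of left-to-right crossings (top closed, middle open, bottom closed)
of the standard `s × s` box. -/
def EWitness (δ : ℝ) (s : ℕ) (ω : (ℤ × ℤ) → Bool)
    (γt γm γb : List (ℤ × ℤ)) : Prop :=
  LRCross s ω false γt ∧ LRCross s ω true γm ∧ LRCross s ω false γb ∧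
  γt.Disjoint γm ∧ γt.Disjoint γb ∧ γm.Disjoint γb ∧
  -- (ii) the two closed clusters come within graph distance 2 of each other
  (∃ u ∈ clusterOf s ω false γt, ∃ w ∈ clusterOf s ω false γb,
      u = w ∨ Adj u w ∨ ∃ z, Adj u z ∧ Adj z w) ∧
  -- (iii) the top closed cluster hits the top side within distance δ of the
  -- midpoint of the top side, and stays 2δ away from the other midpoints
  (∃ v ∈ clusterOf s ω false γt, v.2 = (s : ℤ) - 1 ∧ dist (sitePt s v) cTop ≤ δ) ∧
  (∀ v ∈ clusterOf s ω false γt,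
      2 * δ ≤ dist (sitePt s v) cRight ∧ 2 * δ ≤ dist (sitePt s v) cBot ∧
        2 * δ ≤ dist (sitePt s v) cLeft) ∧
  -- (iv) symmetrically for the bottom closed cluster
  (∃ v ∈ clusterOf s ω false γb, v.2 = 0 ∧ dist (sitePt s v) cBot ≤ δ) ∧
  (∀ v ∈ clusterOf s ω false γb,
      2 * δ ≤ dist (sitePt s v) cTop ∧ 2 * δ ≤ dist (sitePt s v) cRight ∧
        2 * δ ≤ dist (sitePt s v) cLeft) ∧
  -- (v) the open cluster hits the left and right sides near their midpoints
  -- and stays 2δ away from the top and bottom midpoints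
  (∃ v ∈ clusterOf s ω true γm, v.1 = 0 ∧ dist (sitePt s v) cLeft ≤ δ) ∧
  (∃ v ∈ clusterOf s ω true γm, v.1 = (s : ℤ) - 1 ∧ dist (sitePt s v) cRight ≤ δ) ∧
  ∀ v ∈ clusterOf s ω true γm,
      2 * δ ≤ dist (sitePt s v) cTop ∧ 2 * δ ≤ dist (sitePt s v) cBot

/-- The event `E` (with parameter `δ`) for the standard `s × s` box. -/
def EventE (δ : ℝ) (s : ℕ) (ω : (ℤ × ℤ) → Bool) : Prop :=
  ∃ γt γm γb, EWitness δ s ω γt γm γb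

/-- `u` lies (weakly) to the left of `w`: smaller Euclidean abscissa, ties
broken by the second coordinate. -/
def LeftLe (u w : ℤ × ℤ) : Prop :=
  2 * u.1 + u.2 < 2 * w.1 + w.2 ∨ (2 * u.1 + u.2 = 2 * w.1 + w.2 ∧ u.2 ≤ w.2)

/-- `u` lies strictly to the left of `w`. -/
def LeftLt (u w : ℤ × ℤ) : Prop := LeftLe u w ∧ u ≠ w

/-- The left-most element of `S` (junk value if there is none). -/
def leftmostIn (S : Set (ℤ × ℤ)) : ℤ × ℤ :=
  if h : ∃ z, z ∈ S ∧ ∀ w ∈ S, LeftLe z w then h.choose else (0, 0)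

/-- The right-most element of `S` (junk value if there is none). -/
def rightmostIn (S : Set (ℤ × ℤ)) : ℤ × ℤ :=
  if h : ∃ z, z ∈ S ∧ ∀ w ∈ S, LeftLe w z then h.choose else (0, 0)

/-- The set of sites of the standard `s × s` box adjacent to both the top and
the bottom closed clusters produced by the event `E`. -/
def touchSet (δ : ℝ) (s : ℕ) (ω : (ℤ × ℤ) → Bool) : Set (ℤ × ℤ) :=
  {z | z ∈ lam s ∧ ∃ γt γm γb, EWitness δ s ω γt γm γb ∧
    (∃ u ∈ clusterOf s ω false γt, Adj z u) ∧ ∃ w ∈ clusterOf s ω false γb, Adj z w}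

/-- The crossing observable `X` of the standard `s × s` box: the `D`-distance,
in the open subgraph of the box, between the left-most and the right-most
sites adjacent to both the top and the bottom closed clusters. -/
def XVar (D : Set (ℤ × ℤ) → ℤ × ℤ → ℤ × ℤ → ℝ≥0∞) (δ : ℝ) (s : ℕ)
    (ω : (ℤ × ℤ) → Bool) : ℝ≥0∞ :=
  D (opens ω (lam s)) (leftmostIn (touchSet δ s ω)) (rightmostIn (touchSet δ s ω))

/-- The paper's fixed value `δ = 1/10000`. -/
def δ₀ : ℝ := 1 / 10000

/-- The `(1-p)`-quantile `q_n(p)` of `X_{Λ_n}` conditioned on `E(Λ_n)`. -/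
def qn (D : Set (ℤ × ℤ) → ℤ × ℤ → ℤ × ℤ → ℝ≥0∞) (n : ℕ) (p : ℝ) : ℝ≥0∞ :=
  sInf {t : ℝ≥0∞ | 1 - p ≤ cpr n (fun ω => XVar D δ₀ n ω ≤ t) (EventE δ₀ n)}

/-- `κ = κ(n,R)`, the unique integer with `R^(κ-1) < n ≤ R^κ`. -/
def kappa (R n : ℕ) : ℕ := sInf {k | n ≤ R ^ k}

/-- `P(X_s > t)`: the probability that the crossing observable of the
standard `s × s` box exceeds `t`, conditioned on the event `E`. -/
def tailP (D : Set (ℤ × ℤ) → ℤ × ℤ → ℤ × ℤ → ℝ≥0∞) (s : ℕ) (t : ℝ≥0∞) : ℝ :=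
  cpr s (fun ω => t < XVar D δ₀ s ω) (EventE δ₀ s)

/-- Hypothesis `(✳)` for `(α, R, p)`: the a priori polynomial tail bound. -/
def StarHyp (D : Set (ℤ × ℤ) → ℤ × ℤ → ℤ × ℤ → ℝ≥0∞) (α : ℝ) (R : ℕ) (p : ℝ) :
    Prop :=
  ∃ C₀ : ℝ, 0 < C₀ ∧ ∀ k : ℕ, 1 ≤ k → ∀ n : ℕ, R ^ k < n →
    tailP D (R ^ (kappa R n - k)) (qn D n p) ≤ C₀ * (R : ℝ) ^ (-α * (k : ℝ))

/-- Hypothesis `(✳★)` for `α`. -/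
def StarStarHyp (D : Set (ℤ × ℤ) → ℤ × ℤ → ℤ × ℤ → ℝ≥0∞) (α : ℝ) : Prop :=
  ∃ R₁ : ℕ, ∀ R : ℕ, R₁ ≤ R → ∃ p₁ : ℝ, 0 < p₁ ∧
    ∀ p : ℝ, 0 < p → p ≤ p₁ → StarHyp D α R p

/-! ## Boxes, annuli and crossings in triangular coordinates -/

/-- Membership in the box `B(x,r) = x + [-r,r)²` (triangular coordinates). -/
def memBox (x : ℝ × ℝ) (r : ℝ) (p : ℝ × ℝ) : Prop :=
  x.1 - r ≤ p.1 ∧ p.1 < x.1 + r ∧ x.2 - r ≤ p.2 ∧ p.2 < x.2 + r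

/-- The box `B(x,r)` as a set of points of the plane. -/
def boxPts (x : ℝ × ℝ) (r : ℝ) : Set (ℝ × ℝ) := {p | memBox x r p}

/-- The annulus `A(x;r₁,r₂) = B(x,r₂) ∖ B(x,r₁)` as a set of points. -/
def annPts (x : ℝ × ℝ) (r₁ r₂ : ℝ) : Set (ℝ × ℝ) := boxPts x r₂ \ boxPts x r₁

/-- The unit box `[0,1)²` (triangular coordinates). -/
def unitBox : Set (ℝ × ℝ) := {p | 0 ≤ p.1 ∧ p.1 < 1 ∧ 0 ≤ p.2 ∧ p.2 < 1}

/-- The site `v` of `T_n` lies in `B(x,r)`. -/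
def inBox (n : ℕ) (x : ℝ × ℝ) (r : ℝ) (v : ℤ × ℤ) : Prop := memBox x r (triPt n v)

/-- The site `v` of `T_n` lies in `A(x;r₁,r₂)`. -/
def inAnn (n : ℕ) (x : ℝ × ℝ) (r₁ r₂ : ℝ) (v : ℤ × ℤ) : Prop :=
  inBox n x r₂ v ∧ ¬ inBox n x r₁ v

/-- A crossing of the annulus `A(x;r₁,r₂)`: a path in the annulus whose first
site is adjacent to a site of `B(x,r₁)` and whose last site is adjacent to a
site outside `B(x,r₂)`. -/
def AnnCross (n : ℕ) (x : ℝ × ℝ) (r₁ r₂ : ℝ) (γ : List (ℤ × ℤ)) : Prop :=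
  IsPath γ ∧ (∀ v ∈ γ, inAnn n x r₁ r₂ v) ∧
    (∃ a w, γ.head? = some a ∧ Adj a w ∧ inBox n x r₁ w) ∧
    ∃ b w, γ.getLast? = some b ∧ Adj b w ∧ ¬ inBox n x r₂ w

/-- A monochromatic crossing of colour `b` of the annulus `A(x;r₁,r₂)`. -/
def AnnCrossCol (n : ℕ) (x : ℝ × ℝ) (r₁ r₂ : ℝ) (ω : (ℤ × ℤ) → Bool) (b : Bool)
    (γ : List (ℤ × ℤ)) : Prop :=
  AnnCross n x r₁ r₂ γ ∧ ∀ v ∈ γ, ω v = b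

/-- There exist `m` pairwise disjoint open crossings of `A(x;r₁,r₂)`. -/
def DisjCross (n : ℕ) (x : ℝ × ℝ) (r₁ r₂ : ℝ) (ω : (ℤ × ℤ) → Bool) (m : ℕ) : Prop :=
  ∃ γ : Fin m → List (ℤ × ℤ), (∀ i, AnnCrossCol n x r₁ r₂ ω true (γ i)) ∧
    ∀ i j, i ≠ j → (γ i).Disjoint (γ j)

/-! ## Circuits and almost-closed loops -/

/-- A circuit (closed walk): a lattice path whose last site is adjacent to,
or coincides with, its first site. -/
def IsCircuit (L : List (ℤ × ℤ)) : Prop :=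
  IsPath L ∧ ∃ a b, L.head? = some a ∧ L.getLast? = some b ∧ (Adj b a ∨ a = b)

/-- The set of sites `C` surrounds `B(x,r₁)` inside `B(x,r₂)`: every lattice
path from a site of `B(x,r₁)` to a site outside `B(x,r₂)` meets `C`. -/
def SurroundsIn (n : ℕ) (x : ℝ × ℝ) (r₁ r₂ : ℝ) (C : Set (ℤ × ℤ)) : Prop :=
  ∀ γ : List (ℤ × ℤ), IsPath γ →
    (∃ a, γ.head? = some a ∧ inBox n x r₁ a) →
    (∃ b, γ.getLast? = some b ∧ ¬ inBox n x r₂ b) →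
    ∃ v ∈ γ, v ∈ C

/-- The number of open sites (defects) on the list `L`. -/
def nDefects (ω : (ℤ × ℤ) → Bool) (L : List (ℤ × ℤ)) : ℕ :=
  (L.toFinset.filter fun v => ω v = true).card

/-- An almost-closed loop of the annulus `A(x;r₁,r₂)` with `m` defects:
a circuit in the annulus surrounding `B(x,r₁)`, all of whose sites are closed
except for exactly `m` open sites (the defects), each defect lying on a
distinct one of `m` pairwise disjoint open crossings of the annulus. -/
def IsACLoop (n : ℕ) (x : ℝ × ℝ) (r₁ r₂ : ℝ) (ω : (ℤ × ℤ) → Bool) (m : ℕ)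
    (L : List (ℤ × ℤ)) : Prop :=
  IsCircuit L ∧ (∀ v ∈ L, inAnn n x r₁ r₂ v) ∧
    SurroundsIn n x r₁ r₂ {v | v ∈ L} ∧ nDefects ω L = m ∧
    ∃ (d : Fin m → ℤ × ℤ) (γ : Fin m → List (ℤ × ℤ)),
      Function.Injective d ∧ (∀ i, d i ∈ L ∧ ω (d i) = true) ∧
      (∀ v ∈ L, ω v = true → ∃ i, v = d i) ∧
      (∀ i, AnnCrossCol n x r₁ r₂ ω true (γ i) ∧ d i ∈ γ i) ∧
      ∀ i j, i ≠ j → (γ i).Disjoint (γ j)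

/-- The minimal number of defects of an almost-closed loop of `A(x;r₁,r₂)`. -/
def minDefects (n : ℕ) (x : ℝ × ℝ) (r₁ r₂ : ℝ) (ω : (ℤ × ℤ) → Bool) : ℕ :=
  sInf {m | ∃ L, IsACLoop n x r₁ r₂ ω m L}

/-- `int φ`: the sites of the loop `L` together with all sites of `B(x,r₂)`
every lattice path from which to the complement of `B(x,r₂)` meets `L`. -/
def intRegion (n : ℕ) (x : ℝ × ℝ) (r₂ : ℝ) (L : List (ℤ × ℤ)) : Set (ℤ × ℤ) :=
  {v | v ∈ L} ∪ {z | inBox n x r₂ z ∧ ∀ γ : List (ℤ × ℤ), IsPath γ →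
    γ.head? = some z → (∃ b, γ.getLast? = some b ∧ ¬ inBox n x r₂ b) →
    ∃ v ∈ γ, v ∈ L}

/-- `L` is the outermost almost-closed loop of `A(x;r₁,r₂)` with minimally
many defects: its enclosed region contains that of every other
minimal-defect almost-closed loop. -/
def OutermostLoop (n : ℕ) (x : ℝ × ℝ) (r₁ r₂ : ℝ) (ω : (ℤ × ℤ) → Bool)
    (L : List (ℤ × ℤ)) : Prop :=
  IsACLoop n x r₁ r₂ ω (minDefects n x r₁ r₂ ω) L ∧
    ∀ L', IsACLoop n x r₁ r₂ ω (minDefects n x r₁ r₂ ω) L' →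
      intRegion n x r₂ L' ⊆ intRegion n x r₂ L

/-! ## The events `F₁`, `F₂`, `F₃` and the defect-distance property -/

/-- The `ℓ¹` distance in triangular coordinates. -/
def l1dist (p q : ℝ × ℝ) : ℝ := |p.1 - q.1| + |p.2 - q.2|

/-- Event `F₁(M)`: there are at most `M` pairwise disjoint open crossings of
`A(x;r,2r)`. -/
def F1 (n : ℕ) (x : ℝ × ℝ) (r : ℝ) (M : ℕ) (ω : (ℤ × ℤ) → Bool) : Prop :=
  ¬ DisjCross n x r (2 * r) ω (M + 1)

/-- Event `F₂(a)`: every defect of the outermost minimal-defect almost-closed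
loop of `A(x;r,2r)` is at `ℓ¹`-distance at least `a·r` from the boundary of
the annulus. -/
def F2 (n : ℕ) (x : ℝ × ℝ) (r a : ℝ) (ω : (ℤ × ℤ) → Bool) : Prop :=
  ∀ L, OutermostLoop n x r (2 * r) ω L → ∀ v ∈ L, ω v = true →
    ∀ q ∈ frontier (annPts x r (2 * r)), a * r ≤ l1dist (triPt n v) q

/-- Event `F₃(a)`: the defects of the outermost minimal-defect almost-closed
loop of `A(x;r,2r)` are pairwise at `ℓ¹`-distance at least `a·r`. -/
def F3 (n : ℕ) (x : ℝ × ℝ) (r a : ℝ) (ω : (ℤ × ℤ) → Bool) : Prop :=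
  ∀ L, OutermostLoop n x r (2 * r) ω L → ∀ v ∈ L, ω v = true →
    ∀ w ∈ L, ω w = true → v ≠ w → a * r ≤ l1dist (triPt n v) (triPt n w)

/-- The defect-distance property for the annulus `A(x;r,2r)`: any two defects
of the outermost minimal-defect almost-closed loop `φ` that are joined by an
open path inside `int φ` are within `D`-distance `t` of each other in the
graph induced on the open sites of `int φ`. -/
def GoodDist (D : Set (ℤ × ℤ) → ℤ × ℤ → ℤ × ℤ → ℝ≥0∞) (n : ℕ) (x : ℝ × ℝ)
    (r : ℝ) (t : ℝ≥0∞) (ω : (ℤ × ℤ) → Bool) : Prop :=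
  ∀ L, OutermostLoop n x r (2 * r) ω L →
    ∀ v ∈ L, ω v = true → ∀ w ∈ L, ω w = true →
      Conn (opens ω (intRegion n x (2 * r) L)) v w →
        D (opens ω (intRegion n x (2 * r) L)) v w ≤ t

/-! ## Pivotal sites and sub-boxes -/

/-- `z` is a pivotal site of the standard `s × s` box: every open
left-to-right crossing passes through it. -/
def PivotalLR (s : ℕ) (ω : (ℤ × ℤ) → Bool) (z : ℤ × ℤ) : Prop :=
  z ∈ lam s ∧ ∀ γ, LRCross s ω true γ → z ∈ γ

/-- `z₁, z₂` are consecutive pivotal sites (from left to right). -/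
def ConsecPiv (s : ℕ) (ω : (ℤ × ℤ) → Bool) (z₁ z₂ : ℤ × ℤ) : Prop :=
  PivotalLR s ω z₁ ∧ PivotalLR s ω z₂ ∧ LeftLt z₁ z₂ ∧
    ∀ z, PivotalLR s ω z → ¬ (LeftLt z₁ z ∧ LeftLt z z₂)

/-- The configuration of the lattice box with corner `c`, read in standard
coordinates. -/
def shift (ω : (ℤ × ℤ) → Bool) (c : ℤ × ℤ) : (ℤ × ℤ) → Bool := fun v => ω (c + v)

/-- The lattice box with corner `c` and `s` sites per side is contained
in `Λ_n`. -/
def BoxInLam (n : ℕ) (c : ℤ × ℤ) (s : ℕ) : Prop :=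
  0 ≤ c.1 ∧ c.1 + (s : ℤ) ≤ (n : ℤ) ∧ 0 ≤ c.2 ∧ c.2 + (s : ℤ) ≤ (n : ℤ)

/-- The event `τ₂ < ∞` for the standard `s × s` box with threshold `q`:
letting `u` be the left-most pivotal site and `z₁ = x_{τ₁}` the left-most
pivotal site with `X_{u,z₁} > q`, there is a pivotal site `z₂` (weakly to the
right of `z₁`) with `X_{z₁,z₂} > q`. -/
def Tau2Lt (D : Set (ℤ × ℤ) → ℤ × ℤ → ℤ × ℤ → ℝ≥0∞) (s : ℕ) (q : ℝ≥0∞)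
    (ω : (ℤ × ℤ) → Bool) : Prop :=
  ∃ z₁ z₂, PivotalLR s ω z₁ ∧ PivotalLR s ω z₂ ∧
    q < D (opens ω (lam s)) (leftmostIn {z | PivotalLR s ω z}) z₁ ∧
    (∀ z', PivotalLR s ω z' → LeftLt z' z₁ →
      ¬ q < D (opens ω (lam s)) (leftmostIn {z | PivotalLR s ω z}) z') ∧
    LeftLe z₁ z₂ ∧ q < D (opens ω (lam s)) z₁ z₂

/-! ## The diameter path metric and boundary distance -/

/-- The diameter path metric on `S`: the infimum of the Euclidean diameters
of lattice paths from `x` to `y` inside `S` (`∞` if there is none). -/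
def dPathIn (n : ℕ) (S : Set (ℤ × ℤ)) (x y : ℤ × ℤ) : ℝ≥0∞ :=
  ⨅ γ ∈ {γ : List (ℤ × ℤ) | PathIn S x y γ},
    EMetric.diam (sitePt n '' {v | v ∈ γ})

/-- The boundary of the unit parallelogram, as a subset of the Euclidean
plane. -/
def euclBd : Set ℂ := frontier (eucl '' unitBox)

/-! ## Dyadic domains -/

/-- The dyadic box of level `ℓ` with index `ij` (triangular coordinates). -/
def dyBox (ℓ : ℕ) (ij : ℕ × ℕ) : Set (ℝ × ℝ) :=
  {p | (ij.1 : ℝ) / 2 ^ ℓ ≤ p.1 ∧ p.1 < ((ij.1 : ℝ) + 1) / 2 ^ ℓ ∧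
       (ij.2 : ℝ) / 2 ^ ℓ ≤ p.2 ∧ p.2 < ((ij.2 : ℝ) + 1) / 2 ^ ℓ}

/-- `Q ∈ 𝒬`: `Q` is the interior of a finite union of dyadic boxes of a
common level inside `[0,1)²`, and `Q` is simply connected. -/
def IsDyadicDomain (Q : Set (ℝ × ℝ)) : Prop :=
  ∃ (ℓ : ℕ) (S : Finset (ℕ × ℕ)), (∀ ij ∈ S, ij.1 < 2 ^ ℓ ∧ ij.2 < 2 ^ ℓ) ∧
    Q = interior (⋃ ij ∈ S, dyBox ℓ ij) ∧ SimplyConnectedSpace ↥Q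

/-- The sites of `T_n` lying in `Q`. -/
def lamQ (n : ℕ) (Q : Set (ℝ × ℝ)) : Set (ℤ × ℤ) := {v | triPt n v ∈ Q}

/-! ## `R`-adic boxes and the boundary events `J¹`, `J²` -/

/-- Half the side length of a level-`k` `R`-adic box (side `n⁻¹ R^(κ-k)`). -/
def radicHalf (R n k : ℕ) : ℝ := (R : ℝ) ^ (kappa R n - k) / (2 * n)

/-- The centre of the level-`k` `R`-adic box of index `ij`. -/
def radicCtr (R n k : ℕ) (ij : ℕ × ℕ) : ℝ × ℝ :=
  ((2 * (ij.1 : ℝ) + 1) * radicHalf R n k, (2 * (ij.2 : ℝ) + 1) * radicHalf R n k)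

/-- The event `J¹_k`: every open path of Euclidean diameter at least
`n⁻¹ R^(κ-k)` contains a site at Euclidean distance more than
`n⁻¹ R^(κ-(1+ν)k+3)` from the boundary of `[0,1)²`. -/
def J1 (R n : ℕ) (ν : ℝ) (k : ℕ) (ω : (ℤ × ℤ) → Bool) : Prop :=
  ∀ γ : List (ℤ × ℤ), IsPath γ → (∀ v ∈ γ, v ∈ opens ω (lam n)) →
    ENNReal.ofReal ((n : ℝ)⁻¹ * (R : ℝ) ^ (kappa R n - k)) ≤
      EMetric.diam (sitePt n '' {v | v ∈ γ}) →
    ∃ v ∈ γ, (n : ℝ)⁻¹ * (R : ℝ) ^ ((kappa R n : ℝ) - (1 + ν) * (k : ℝ) + 3) <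
      Metric.infDist (sitePt n v) euclBd

/-- A level-`k` `R`-adic box is `J²`-bad: it lies in `[0,1)²`, its `R³`-fold
concentric enlargement meets the boundary of `[0,1)²`, and there are three
pairwise disjoint arms (two open, one closed) crossing the region
`R^(3+k(1/3+ν))·B ∖ R³·B`. -/
def J2Bad (R n : ℕ) (ν : ℝ) (k : ℕ) (ω : (ℤ × ℤ) → Bool) (ij : ℕ × ℕ) : Prop :=
  boxPts (radicCtr R n k ij) (radicHalf R n k) ⊆ unitBox ∧
  (∃ p ∈ boxPts (radicCtr R n k ij) ((R : ℝ) ^ 3 * radicHalf R n k),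
      p ∈ frontier unitBox) ∧
  ∃ γ : Fin 3 → List (ℤ × ℤ),
    (∀ i j, i ≠ j → (γ i).Disjoint (γ j)) ∧
    AnnCrossCol n (radicCtr R n k ij) ((R : ℝ) ^ 3 * radicHalf R n k)
      ((R : ℝ) ^ ((3 : ℝ) + (k : ℝ) * (1 / 3 + ν)) * radicHalf R n k) ω true (γ 0) ∧
    AnnCrossCol n (radicCtr R n k ij) ((R : ℝ) ^ 3 * radicHalf R n k)
      ((R : ℝ) ^ ((3 : ℝ) + (k : ℝ) * (1 / 3 + ν)) * radicHalf R n k) ω true (γ 1) ∧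
    AnnCrossCol n (radicCtr R n k ij) ((R : ℝ) ^ 3 * radicHalf R n k)
      ((R : ℝ) ^ ((3 : ℝ) + (k : ℝ) * (1 / 3 + ν)) * radicHalf R n k) ω false (γ 2)

/-- The event `J²_k`: there are at most `R^((1/3+ν)k)` `J²`-bad level-`k`
`R`-adic boxes. -/
def J2 (R n : ℕ) (ν : ℝ) (k : ℕ) (ω : (ℤ × ℤ) → Bool) : Prop :=
  (Nat.card {ij : ℕ × ℕ // J2Bad R n ν k ω ij} : ℝ) ≤
    (R : ℝ) ^ ((1 / 3 + ν) * (k : ℝ))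

/-! ## The four-arm event in a box -/

/-- The sites of the lattice box with corner `c` and `s` sites per side. -/
def latBox (c : ℤ × ℤ) (s : ℕ) : Set (ℤ × ℤ) :=
  {v | c.1 ≤ v.1 ∧ v.1 < c.1 + (s : ℤ) ∧ c.2 ≤ v.2 ∧ v.2 < c.2 + (s : ℤ)}

/-- The lattice box with corner `c` and `s` sites per side, as a region in
triangular coordinates. -/
def latBoxRegion (n : ℕ) (c : ℤ × ℤ) (s : ℕ) : Set (ℝ × ℝ) :=
  {p | (c.1 : ℝ) / n ≤ p.1 ∧ p.1 < ((c.1 : ℝ) + s) / n ∧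
       (c.2 : ℝ) / n ≤ p.2 ∧ p.2 < ((c.2 : ℝ) + s) / n}

/-- The `i`-th side of the (closed) box with corner `c`, `s` sites per side,
numbered clockwise from the top, as a segment in triangular coordinates. -/
def sideSet (n : ℕ) (c : ℤ × ℤ) (s : ℕ) (i : Fin 4) : Set (ℝ × ℝ) :=
  match i with
  | 0 => {p | p.2 = ((c.2 : ℝ) + s) / n ∧ (c.1 : ℝ) / n ≤ p.1 ∧ p.1 ≤ ((c.1 : ℝ) + s) / n}
  | 1 => {p | p.1 = ((c.1 : ℝ) + s) / n ∧ (c.2 : ℝ) / n ≤ p.2 ∧ p.2 ≤ ((c.2 : ℝ) + s) / n}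
  | 2 => {p | p.2 = (c.2 : ℝ) / n ∧ (c.1 : ℝ) / n ≤ p.1 ∧ p.1 ≤ ((c.1 : ℝ) + s) / n}
  | 3 => {p | p.1 = (c.1 : ℝ) / n ∧ (c.2 : ℝ) / n ≤ p.2 ∧ p.2 ≤ ((c.2 : ℝ) + s) / n}

/-- The site `v` lies on the row of the box (corner `c`, `s` sites per side)
nearest to its `i`-th side. -/
def OnSide (c : ℤ × ℤ) (s : ℕ) (i : Fin 4) (v : ℤ × ℤ) : Prop :=
  match i with
  | 0 => v.2 = c.2 + (s : ℤ) - 1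
  | 1 => v.1 = c.1 + (s : ℤ) - 1
  | 2 => v.2 = c.2
  | 3 => v.1 = c.1

/-- The prescribed colours of the four arms: closed towards the top and the
bottom, open towards the right and the left. -/
def armColor : Fin 4 → Bool := ![false, true, false, true]

/-- The four-arm event `Arm₄(x,a,B)` for the lattice box `B` with corner `c`
and `s` sites per side: four pairwise disjoint arms of the prescribed colours
from `B(x,a)` to the four sides of `B`, each consisting of sites of
`B ∖ B(x,a)`; the requirement for a side met by `B(x,a)` is waived. -/
def Arm4 (n : ℕ) (c : ℤ × ℤ) (s : ℕ) (x : ℝ × ℝ) (a : ℝ)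
    (ω : (ℤ × ℤ) → Bool) : Prop :=
  ∃ η : Fin 4 → List (ℤ × ℤ),
    (∀ i j, i ≠ j → (η i).Disjoint (η j)) ∧
    ∀ i : Fin 4, (¬ ∃ p ∈ boxPts x a, p ∈ sideSet n c s i) →
      IsPath (η i) ∧
      (∀ v ∈ η i, v ∈ latBox c s ∧ ¬ inBox n x a v ∧ ω v = armColor i) ∧
      (∃ h w, (η i).head? = some h ∧ Adj h w ∧ inBox n x a w) ∧
      ∃ e, (η i).getLast? = some e ∧ OnSide c s i e

/-! ## Tiles and minimal distances (disjoint-annuli construction) -/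

/-- The centres of the tiles of side `n⁻¹R^(κ-j)` entirely contained in the
box `B(0, R^(-i)/2)`. -/
def tileCtrs (R n : ℕ) (i j : ℤ) : Set (ℝ × ℝ) :=
  {p | ∃ a b : ℕ,
    ((a : ℝ) + 1) * ((n : ℝ)⁻¹ * (R : ℝ) ^ ((kappa R n : ℤ) - j)) ≤ (R : ℝ) ^ (-i) ∧
    ((b : ℝ) + 1) * ((n : ℝ)⁻¹ * (R : ℝ) ^ ((kappa R n : ℤ) - j)) ≤ (R : ℝ) ^ (-i) ∧
    p = (-(R : ℝ) ^ (-i) / 2 + ((a : ℝ) + 1 / 2) * ((n : ℝ)⁻¹ * (R : ℝ) ^ ((kappa R n : ℤ) - j)),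
         -(R : ℝ) ^ (-i) / 2 + ((b : ℝ) + 1 / 2) * ((n : ℝ)⁻¹ * (R : ℝ) ^ ((kappa R n : ℤ) - j)))}

/-- `min(R^(-i), min_(v<u) |z_u - z_v|)` (Euclidean distances). -/
def rmin (R : ℕ) (i : ℤ) (m : ℕ) (z : Fin m → ℝ × ℝ) (u : Fin m) : ℝ :=
  sInf ({(R : ℝ) ^ (-i)} ∪ {d | ∃ v, v < u ∧ d = dist (eucl (z u)) (eucl (z v))})

/-! ## Semiarms and the events `H_j` -/

/-- A colour-`b` crossing of `A(x;r₁,r₂)` whose sites lie in `S`. -/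
def AnnCrossIn (S : Set (ℤ × ℤ)) (n : ℕ) (x : ℝ × ℝ) (r₁ r₂ : ℝ)
    (ω : (ℤ × ℤ) → Bool) (b : Bool) (γ : List (ℤ × ℤ)) : Prop :=
  AnnCrossCol n x r₁ r₂ ω b γ ∧ ∀ v ∈ γ, v ∈ S

/-- Six pairwise disjoint arms of alternating colours crossing `A(x;r₁,r₂)`,
with sites in `S`. -/
def SixArms (S : Set (ℤ × ℤ)) (n : ℕ) (x : ℝ × ℝ) (r₁ r₂ : ℝ)
    (ω : (ℤ × ℤ) → Bool) : Prop :=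
  ∃ γ : Fin 6 → List (ℤ × ℤ), (∀ i j, i ≠ j → (γ i).Disjoint (γ j)) ∧
    ∀ i, AnnCrossIn S n x r₁ r₂ ω (decide (i.1 % 2 = 0)) (γ i)

/-- Three pairwise disjoint arms of alternating colours crossing
`A(x;r₁,r₂)`, with sites in `S`. -/
def ThreeArms (S : Set (ℤ × ℤ)) (n : ℕ) (x : ℝ × ℝ) (r₁ r₂ : ℝ)
    (ω : (ℤ × ℤ) → Bool) : Prop :=
  ∃ γ : Fin 3 → List (ℤ × ℤ), (∀ i j, i ≠ j → (γ i).Disjoint (γ j)) ∧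
    ∀ i, AnnCrossIn S n x r₁ r₂ ω (decide (i.1 % 2 = 0)) (γ i)

/-- The box with centre `z` and half-width `h` has six semiarms of length `l`
(scaling base `R`, ambient site set `S`): for some `0 ≤ l' ≤ l` there are six
alternating arms crossing `R^(l')·B ∖ R³·B` and six crossing
`R^l·B ∖ R^(l'+3)·B`. -/
def SixSemiarms (S : Set (ℤ × ℤ)) (n R : ℕ) (z : ℝ × ℝ) (h : ℝ) (l : ℕ)
    (ω : (ℤ × ℤ) → Bool) : Prop :=
  ∃ l' : ℕ, l' ≤ l ∧ SixArms S n z ((R : ℝ) ^ 3 * h) ((R : ℝ) ^ l' * h) ω ∧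
    SixArms S n z ((R : ℝ) ^ (l' + 3) * h) ((R : ℝ) ^ l * h) ω

/-- The distances from `z` to the four sides of the box with corner `c` and
`s` sites per side (clockwise from the top). -/
def sideDists (n : ℕ) (c : ℤ × ℤ) (s : ℕ) (z : ℝ × ℝ) : Fin 4 → ℝ :=
  ![((c.2 : ℝ) + s) / n - z.2, ((c.1 : ℝ) + s) / n - z.1,
    z.2 - (c.2 : ℝ) / n, z.1 - (c.1 : ℝ) / n]

/-- The projections of `z` to the four sides of the box. -/
def sideProj (n : ℕ) (c : ℤ × ℤ) (s : ℕ) (z : ℝ × ℝ) : Fin 4 → ℝ × ℝ :=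
  ![(z.1, ((c.2 : ℝ) + s) / n), (((c.1 : ℝ) + s) / n, z.2),
    (z.1, (c.2 : ℝ) / n), ((c.1 : ℝ) / n, z.2)]

/-- `q` is the projection of `z` to a nearest side of the box. -/
def ProjNearestSide (n : ℕ) (c : ℤ × ℤ) (s : ℕ) (z q : ℝ × ℝ) : Prop :=
  ∃ i : Fin 4, q = sideProj n c s z i ∧
    ∀ i' : Fin 4, sideDists n c s z i ≤ sideDists n c s z i'

/-- The box with centre `z` (of level `j`) has three semiarms of length `l`
near the boundary of the ambient box with corner `c` and `s` sites per side:
with `z'` the projection of `z` to a nearest side, for some `0 ≤ l' ≤ l`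
there are three alternating arms crossing the ambient intersection of
`A(z'; n⁻¹R^(κ-j+3), n⁻¹R^(κ-j+l'))` and three crossing
`A(z'; n⁻¹R^(κ-j+l'), n⁻¹R^(κ-j+l))`. -/
def ThreeSemiarmsBd (n R : ℕ) (c : ℤ × ℤ) (s : ℕ) (z : ℝ × ℝ) (j l : ℕ)
    (ω : (ℤ × ℤ) → Bool) : Prop :=
  ∃ z', ProjNearestSide n c s z z' ∧ ∃ l' : ℕ, l' ≤ l ∧
    ThreeArms (latBox c s) n z' ((n : ℝ)⁻¹ * (R : ℝ) ^ (kappa R n - j + 3))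
      ((n : ℝ)⁻¹ * (R : ℝ) ^ (kappa R n - j + l')) ω ∧
    ThreeArms (latBox c s) n z' ((n : ℝ)⁻¹ * (R : ℝ) ^ (kappa R n - j + l'))
      ((n : ℝ)⁻¹ * (R : ℝ) ^ (kappa R n - j + l)) ω

/-- The centre of the level-`j` `R`-adic sub-box of index `ab` of the box
with corner `c`. -/
def subCtr (n R : ℕ) (c : ℤ × ℤ) (j : ℕ) (ab : ℕ × ℕ) : ℝ × ℝ :=
  ((c.1 : ℝ) / n + (2 * (ab.1 : ℝ) + 1) * radicHalf R n j,
   (c.2 : ℝ) / n + (2 * (ab.2 : ℝ) + 1) * radicHalf R n j)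

/-- `N_{j,B^(i)}`: the number of level-`j` `R`-adic sub-boxes of the box
`B^(k)` (corner `c`) contained in `B(zc, R^(-i)/2)` having six semiarms of
alternating colours of length `j - i - 4`. -/
def NjCount (n R : ℕ) (c : ℤ × ℤ) (k i j : ℕ) (zc : ℝ × ℝ)
    (ω : (ℤ × ℤ) → Bool) : ℕ :=
  Nat.card {ab : ℕ × ℕ // ab.1 < R ^ (j - k) ∧ ab.2 < R ^ (j - k) ∧
    boxPts (subCtr n R c j ab) (radicHalf R n j) ⊆
      boxPts zc ((R : ℝ) ^ (-(i : ℤ)) / 2) ∧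
    SixSemiarms (latBox c (R ^ (kappa R n - k))) n R (subCtr n R c j ab)
      (radicHalf R n j) (j - i - 4) ω}

/-- `N^h_j`: the number of level-`j` `R`-adic sub-boxes of `B^(k)` whose
`R³`-fold enlargement meets the boundary of `B^(k)` and which have three
semiarms of length `j - k - 1` near the boundary. -/
def NhCount (n R : ℕ) (c : ℤ × ℤ) (k j : ℕ) (ω : (ℤ × ℤ) → Bool) : ℕ :=
  Nat.card {ab : ℕ × ℕ // ab.1 < R ^ (j - k) ∧ ab.2 < R ^ (j - k) ∧
    (∃ p ∈ boxPts (subCtr n R c j ab) ((R : ℝ) ^ 3 * radicHalf R n j),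
        p ∈ frontier (latBoxRegion n c (R ^ (kappa R n - k)))) ∧
    ThreeSemiarmsBd n R c (R ^ (kappa R n - k)) (subCtr n R c j ab) j
      (j - k - 1) ω}

/-- The event `H_j` for the box `B^(k)` with corner `c`: all the semiarm
counts `N_{j,B^(i)}` (for `k-2 ≤ i ≤ j-10` and all admissible centres) and
`N^h_j` are at most `R^(jν)`. -/
def Hj (n R : ℕ) (c : ℤ × ℤ) (k : ℕ) (ν : ℝ) (j : ℕ)
    (ω : (ℤ × ℤ) → Bool) : Prop :=
  (∀ i : ℕ, (k : ℤ) - 2 ≤ (i : ℤ) → (i : ℤ) ≤ (j : ℤ) - 10 →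
    ∀ ab : ℕ × ℕ, ab.1 < R ^ (i + 3 - k) → ab.2 < R ^ (i + 3 - k) →
      (NjCount n R c k i j (subCtr n R c (i + 3) ab) ω : ℝ) ≤
        (R : ℝ) ^ (ν * (j : ℝ))) ∧
  (k + 9 ≤ j → (NhCount n R c k j ω : ℝ) ≤ (R : ℝ) ^ (ν * (j : ℝ)))

/-! ## One-arm counts and left-right crossing observables -/

/-- The number of open sites of `Λ_n` joined by an open path to a site at
Euclidean distance at least `1/2`. -/
def oneArmCount (n : ℕ) (ω : (ℤ × ℤ) → Bool) : ℕ :=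
  Nat.card {z : ℤ × ℤ // z ∈ lam n ∧ ω z = true ∧
    ∃ w, Conn (opens ω (lam n)) z w ∧ 1 / 2 ≤ dist (sitePt n z) (sitePt n w)}

/-- The sites of `Λ_n` within one lattice spacing of the left side. -/
def leftSide (n : ℕ) : Set (ℤ × ℤ) := {v | v ∈ lam n ∧ v.1 = 0}

/-- The sites of `Λ_n` within one lattice spacing of the right side. -/
def rightSide (n : ℕ) : Set (ℤ × ℤ) := {v | v ∈ lam n ∧ v.1 = (n : ℤ) - 1}

/-- The event that some open path joins `∂_L Λ_n` to `∂_R Λ_n`. -/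
def CrossEvent (n : ℕ) (ω : (ℤ × ℤ) → Bool) : Prop :=
  ∃ x ∈ leftSide n, ∃ y ∈ rightSide n, Conn (opens ω (lam n)) x y

/-- The geodesic distance between `∂_L Λ_n` and `∂_R Λ_n` in the open
subgraph of `Λ_n`. -/
def SGeo (n : ℕ) (ω : (ℤ × ℤ) → Bool) : ℝ≥0∞ :=
  ⨅ x ∈ leftSide n, ⨅ y ∈ rightSide n, dGeo (opens ω (lam n)) x y

/-- The effective resistance between `∂_L Λ_n` and `∂_R Λ_n` in the open
subgraph of `Λ_n`. -/
def SRes (n : ℕ) (ω : (ℤ × ℤ) → Bool) : ℝ≥0∞ :=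
  (⨅ f ∈ {f : ℤ × ℤ → ℝ | (∀ x ∈ opens ω (leftSide n), f x = 1) ∧
      ∀ y ∈ opens ω (rightSide n), f y = 0}, energy (opens ω (lam n)) f)⁻¹

/-- The conditional expectation `E[S | F]` under critical percolation
on `Λ_n`. -/
def condExp (n : ℕ) (S : ((ℤ × ℤ) → Bool) → ℝ≥0∞)
    (F : ((ℤ × ℤ) → Bool) → Prop) : ℝ≥0∞ :=
  (∑ cc : Config n, if F (cfg n cc) then S (cfg n cc) else 0) /
    (Nat.card {cc : Config n // F (cfg n cc)} : ℝ≥0∞)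

/-- The `q`-quantile of the conditional law of `S` given `F`. -/
def condQuant (n : ℕ) (S : ((ℤ × ℤ) → Bool) → ℝ≥0∞)
    (F : ((ℤ × ℤ) → Bool) → Prop) (q : ℝ) : ℝ≥0∞ :=
  sInf {t : ℝ≥0∞ | q ≤ cpr n (fun ω => S ω ≤ t) F}

/-! ### Removing ranges of radii from an interval -/

/-- Remove the ranges `(a t, b t)`, `t ∈ T`, from `[0, r₀)`. What is kept consists of at most
`#T + 1` intervals `[s l, r l)`, listed from the outermost to the innermost one (which starts at
`0`), and the product of ratios is within a factor `3 ^ #T` of `1 / r₀`. The recursion removes,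
among the ranges starting below `r₀`, one that reaches furthest, and continues below its start. -/
lemma excise_intervals {ι : Type*} {ρ : ℝ} (hρ : 0 < ρ) (a b : ι → ℝ) (T : Finset ι) :
    ∀ r₀ : ℝ, ρ ≤ r₀ → (∀ t ∈ T, ρ ≤ a t ∧ b t ≤ 3 * a t ∧ a t ≤ b t) →
      ∃ n ≤ T.card, ∃ s r : ℕ → ℝ,
        (∀ l < n, 0 < s l ∧ s l < r l) ∧ s n = 0 ∧ ρ ≤ r n ∧ (∀ l ≤ n, r l ≤ r₀) ∧
        (∀ l l', l < l' → l' ≤ n → r l' ≤ s l) ∧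
        (∀ l ≤ n, ∀ t ∈ T, r l ≤ a t ∨ b t ≤ s l) ∧
        (∏ l ∈ Finset.range n, s l) / (∏ l ∈ Finset.range (n + 1), r l) ≤ 3 ^ T.card / r₀ := by
  induction T using Finset.strongInduction with
  | H T ih =>
  intro r₀ hr₀ hT
  have hr₀pos : 0 < r₀ := hρ.trans_le hr₀
  rcases (T.filter fun t => a t < r₀).eq_empty_or_nonempty with hE | hN
  · refine ⟨0, Nat.zero_le _, fun _ => 0, fun _ => r₀, ?_, rfl, hr₀, fun _ _ => le_rfl, ?_, ?_, ?_⟩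
    · intro l hl; omega
    · intro l l' h h'; omega
    · intro l _ t ht
      left
      by_contra hlt
      have : t ∈ T.filter fun t => a t < r₀ := Finset.mem_filter.2 ⟨ht, not_le.1 hlt⟩
      simp [hE] at this
    · simp only [Finset.range_zero, Finset.prod_empty, zero_add, Finset.range_one,
        Finset.prod_singleton]
      gcongr
      exact one_le_pow₀ (by norm_num)
  · obtain ⟨t, ht, hmax⟩ := Finset.exists_max_image _ b hN
    obtain ⟨htT, hta⟩ := Finset.mem_filter.1 ht
    obtain ⟨h1, h2, h3⟩ := hT t htT
    have hapos : 0 < a t := hρ.trans_le h1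
    have hcard : (T.erase t).card + 1 = T.card := Finset.card_erase_add_one htT
    obtain ⟨n, hn, s, r, hs, hsn, hrn, hr, hdec, havoid, hprod⟩ :=
      ih (T.erase t) (Finset.erase_ssubset htT) (a t) h1
        (fun t' ht' => hT t' (Finset.mem_of_mem_erase ht'))
    have havoid' : ∀ l ≤ n, ∀ t' ∈ T, r l ≤ a t' ∨ b t' ≤ s l := by
      intro l hl t' ht'
      by_cases h : t' = t
      · subst h; exact Or.inl (hr l hl)
      · exact havoid l hl t' (Finset.mem_erase.2 ⟨h, ht'⟩)
    have hpow : (3 : ℝ) ^ T.card = 3 ^ (T.erase t).card * 3 := by rw [← hcard, pow_succ]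
    by_cases hb : b t < r₀
    · refine ⟨n + 1, by omega, fun l => Nat.casesOn l (b t) s, fun l => Nat.casesOn l r₀ r,
        ?_, hsn, hrn, ?_, ?_, ?_, ?_⟩
      · rintro (_ | l) hl
        · exact ⟨hapos.trans_le h3, hb⟩
        · exact hs l (by omega)
      · rintro (_ | l) hl
        · exact le_rfl
        · exact (hr l (by omega)).trans hta.le
      · rintro (_ | l) (_ | l') h h'
        · omega
        · exact (hr l' (by omega)).trans h3
        · omega
        · exact hdec l l' (by omega) (by omega)
      · rintro (_ | l) hl t' ht'
        · rcases lt_or_ge (a t') r₀ with h | h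
          · exact Or.inr (hmax t' (Finset.mem_filter.2 ⟨ht', h⟩))
          · exact Or.inl h
        · exact havoid' l (by omega) t' ht'
      · rw [Finset.prod_range_succ', Finset.prod_range_succ' _ (n + 1)]
        change (∏ l ∈ Finset.range n, s l) * b t / ((∏ l ∈ Finset.range (n + 1), r l) * r₀) ≤ _
        rw [mul_div_mul_comm]
        have hbpos : 0 < b t := hapos.trans_le h3
        calc _ ≤ 3 ^ (T.erase t).card / a t * (b t / r₀) := by gcongr
          _ ≤ 3 ^ (T.erase t).card / a t * (3 * a t / r₀) := by gcongr
          _ = 3 ^ T.card / r₀ := by rw [hpow]; field_simp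
    · refine ⟨n, by omega, s, r, hs, hsn, hrn, fun l hl => (hr l hl).trans hta.le, hdec, havoid',
        hprod.trans ?_⟩
      rw [hpow, div_le_div_iff₀ hapos hr₀pos]
      have : r₀ ≤ 3 * a t := (not_lt.1 hb).trans h2
      calc (3 : ℝ) ^ (T.erase t).card * r₀ ≤ 3 ^ (T.erase t).card * (3 * a t) := by gcongr
        _ = _ := by ring

/-! ### Boxes and distances in triangular coordinates -/

lemma boxPts_mono {x y : ℝ × ℝ} {r r' : ℝ} (h : dist x y + r ≤ r') :
    boxPts y r ⊆ boxPts x r' := by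
  rintro p ⟨h1, h2, h3, h4⟩
  have hx : |x.1 - y.1| ≤ dist x y := by rw [Prod.dist_eq, Real.dist_eq]; exact le_max_left _ _
  have hy : |x.2 - y.2| ≤ dist x y := by
    rw [Prod.dist_eq, Real.dist_eq x.2]; exact le_max_right _ _
  rw [abs_le] at hx hy
  refine ⟨?_, ?_, ?_, ?_⟩ <;> linarith

/-- The boxes are half-open, so touching boxes are still disjoint. -/
lemma boxPts_disjoint {x y : ℝ × ℝ} {r r' : ℝ} (h : r + r' ≤ dist x y) :
    Disjoint (boxPts x r) (boxPts y r') := by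
  rw [Set.disjoint_left]
  rintro p ⟨h1, h2, h3, h4⟩ ⟨h5, h6, h7, h8⟩
  rw [Prod.dist_eq, Real.dist_eq, Real.dist_eq] at h
  have : max |x.1 - y.1| |x.2 - y.2| < r + r' := by
    refine max_lt ?_ ?_ <;> rw [abs_lt] <;> constructor <;> linarith
  linarith

lemma annPts_disjoint_of_le {x : ℝ × ℝ} {s r s' r' : ℝ} (h : r' ≤ s) :
    Disjoint (annPts x s r) (annPts x s' r') := by
  rw [Set.disjoint_left]
  rintro p ⟨_, h1⟩ ⟨h2, _⟩
  exact h1 (boxPts_mono (by simpa using h) h2)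

/-- An annulus around `x` whose radii avoid `(dist x y - q, dist x y + q)` misses `B(y, q)`. -/
lemma annPts_disjoint_of_avoid {x y : ℝ × ℝ} {s r s' r' q : ℝ} (hq : r' ≤ q)
    (h : r ≤ dist x y - q ∨ dist x y + q ≤ s) :
    Disjoint (annPts x s r) (annPts y s' r') := by
  rcases h with h | h
  · exact (boxPts_disjoint (by linarith)).mono Set.sdiff_subset Set.sdiff_subset
  · rw [Set.disjoint_left]
    rintro p ⟨_, h1⟩ ⟨h2, _⟩
    exact h1 (boxPts_mono (by linarith) h2)

lemma dist_eucl_le (p q : ℝ × ℝ) : dist (eucl p) (eucl q) ≤ 3 * dist p q := by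
  have hx : |p.1 - q.1| ≤ dist p q := by rw [Prod.dist_eq, Real.dist_eq]; exact le_max_left _ _
  have hy : |p.2 - q.2| ≤ dist p q := by
    rw [Prod.dist_eq, Real.dist_eq p.2]; exact le_max_right _ _
  have hs : Real.sqrt 3 ≤ 2 := by rw [Real.sqrt_le_left (by norm_num)]; norm_num
  have hs0 := Real.sqrt_nonneg 3
  rw [dist_eq_norm]
  refine (Complex.norm_le_abs_re_add_abs_im _).trans ?_
  have e1 : (eucl p - eucl q).re = (p.1 - q.1) + (p.2 - q.2) / 2 := by
    simp only [eucl, Complex.sub_re]; ring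
  have e2 : (eucl p - eucl q).im = Real.sqrt 3 / 2 * (p.2 - q.2) := by
    simp only [eucl, Complex.sub_im]; ring
  rw [e1, e2, abs_mul, abs_of_nonneg (by positivity : (0 : ℝ) ≤ Real.sqrt 3 / 2)]
  have h1 := abs_add_le (p.1 - q.1) ((p.2 - q.2) / 2)
  rw [abs_div, abs_of_pos (by norm_num : (0 : ℝ) < 2)] at h1
  have h2 : Real.sqrt 3 / 2 * |p.2 - q.2| ≤ 1 * |p.2 - q.2| := by gcongr; linarith
  linarith [abs_nonneg (p.1 - q.1)]

lemma eucl_injective : Function.Injective eucl := by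
  intro p q h
  have h1 := congrArg Complex.re h
  have h2 := congrArg Complex.im h
  simp only [eucl] at h1 h2
  have h3 : p.2 = q.2 := mul_left_cancel₀ (by positivity) h2
  exact Prod.ext (by rw [h3] at h1; linarith) h3

/-! ### Tile centres and minimal distances -/

/-- The side length `n⁻¹ R^(κ-j)` of a tile. -/
def tileSide (R n : ℕ) (j : ℤ) : ℝ := (n : ℝ)⁻¹ * (R : ℝ) ^ ((kappa R n : ℤ) - j)

lemma tileSide_pos {R n : ℕ} (hR : 2 ≤ R) (hn : 1 ≤ n) (j : ℤ) : 0 < tileSide R n j := by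
  have : (0 : ℝ) < R := by exact_mod_cast (by omega : 0 < R)
  have : (0 : ℝ) < n := by exact_mod_cast hn
  unfold tileSide
  positivity

lemma tileSide_le_of_mem {R n : ℕ} {i j : ℤ} {p : ℝ × ℝ} (hρ : 0 < tileSide R n j)
    (hp : p ∈ tileCtrs R n i j) : tileSide R n j ≤ (R : ℝ) ^ (-i) := by
  obtain ⟨a, b, ha, -, -⟩ := hp
  change ((a : ℝ) + 1) * tileSide R n j ≤ _ at ha
  have : 0 ≤ (a : ℝ) * tileSide R n j := by positivity
  linarith

lemma le_abs_sub_of_ne {c ρ : ℝ} (hρ : 0 < ρ) {a a' : ℕ} (h : a ≠ a') :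
    ρ ≤ |(c + ((a : ℝ) + 1 / 2) * ρ) - (c + ((a' : ℝ) + 1 / 2) * ρ)| := by
  have e : (c + ((a : ℝ) + 1 / 2) * ρ) - (c + ((a' : ℝ) + 1 / 2) * ρ)
      = (((a : ℤ) - (a' : ℤ) : ℤ) : ℝ) * ρ := by push_cast; ring
  rw [e, abs_mul, abs_of_pos hρ]
  have h1 : (1 : ℝ) ≤ |(((a : ℤ) - (a' : ℤ) : ℤ) : ℝ)| := by
    exact_mod_cast Int.one_le_abs (by omega : (a : ℤ) - a' ≠ 0)
  nlinarith

lemma tileSide_le_dist {R n : ℕ} {i j : ℤ} {p q : ℝ × ℝ} (hρ : 0 < tileSide R n j)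
    (hp : p ∈ tileCtrs R n i j) (hq : q ∈ tileCtrs R n i j) (hne : p ≠ q) :
    tileSide R n j ≤ dist p q := by
  obtain ⟨a, b, -, -, rfl⟩ := hp
  obtain ⟨a', b', -, -, rfl⟩ := hq
  rw [Prod.dist_eq, Real.dist_eq, Real.dist_eq]
  by_cases ha : a = a'
  · by_cases hb : b = b'
    · subst ha hb; exact absurd rfl hne
    · exact (le_abs_sub_of_ne hρ hb).trans (le_max_right _ _)
  · exact (le_abs_sub_of_ne hρ ha).trans (le_max_left _ _)

/-- The largest allowed radius `n⁻¹ R^(κ-i)` is at least `R^(-i)`, because `n ≤ R^κ`. -/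
lemma zpow_le_tileSide {R n : ℕ} (hR : 2 ≤ R) (hn : 1 ≤ n) (i : ℤ) :
    (R : ℝ) ^ (-i) ≤ tileSide R n i := by
  have hR0 : (0 : ℝ) < R := by exact_mod_cast (by omega : 0 < R)
  have hn0 : (0 : ℝ) < n := by exact_mod_cast hn
  have hk : n ≤ R ^ kappa R n := by
    have : kappa R n ∈ {k | n ≤ R ^ k} :=
      Nat.sInf_mem ⟨n, (Nat.lt_pow_self (by omega : 1 < R)).le⟩
    exact this
  have hk' : (n : ℝ) ≤ (R : ℝ) ^ kappa R n := by exact_mod_cast hk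
  unfold tileSide
  rw [sub_eq_add_neg, zpow_add₀ hR0.ne', zpow_natCast, ← mul_assoc]
  have : 1 ≤ (n : ℝ)⁻¹ * (R : ℝ) ^ kappa R n := by
    rw [inv_mul_eq_div, one_le_div hn0]; exact hk'
  exact le_mul_of_one_le_left (by positivity) this

/-- `min(R^(-i), min_(v<u) e(z_u, z_v))`, where `e` is the sup distance in triangular
coordinates: the analogue of `rmin` with `e` in place of the Euclidean distance. -/
def supMin (R : ℕ) (i : ℤ) (m : ℕ) (z : Fin m → ℝ × ℝ) (u : Fin m) : ℝ :=
  sInf ({(R : ℝ) ^ (-i)} ∪ {d | ∃ v, v < u ∧ d = dist (z u) (z v)})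

/-- The minimum of a number and finitely many distances is attained. -/
lemma sInf_dist_mem {m : ℕ} (D : ℝ) (f : Fin m → ℝ) (u : Fin m) :
    IsLeast ({D} ∪ {d | ∃ v, v < u ∧ d = f v}) (sInf ({D} ∪ {d | ∃ v, v < u ∧ d = f v})) := by
  have hfin : ({D} ∪ {d | ∃ v, v < u ∧ d = f v} : Set ℝ).Finite := by
    refine (Set.finite_singleton D).union ((Set.finite_range f).subset ?_)
    rintro d ⟨v, -, rfl⟩
    exact ⟨v, rfl⟩
  have hne : ({D} ∪ {d | ∃ v, v < u ∧ d = f v} : Set ℝ).Nonempty := ⟨D, Or.inl rfl⟩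
  exact ⟨hne.csInf_mem hfin, fun x hx => csInf_le hfin.bddBelow hx⟩

lemma rmin_pos {R : ℕ} (hR : 2 ≤ R) (i : ℤ) {m : ℕ} {z : Fin m → ℝ × ℝ}
    (hz : Function.Injective z) (u : Fin m) : 0 < rmin R i m z u := by
  have hR0 : (0 : ℝ) < R := by exact_mod_cast (by omega : 0 < R)
  rcases (sInf_dist_mem ((R : ℝ) ^ (-i)) (fun v => dist (eucl (z u)) (eucl (z v))) u).1
    with h | ⟨v, hv, h⟩
  · rw [rmin, Set.mem_singleton_iff.1 h]; positivity
  · rw [rmin, h, dist_pos]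
    exact fun he => hv.ne' (hz (eucl_injective he))

lemma rmin_le_three_mul_supMin (R : ℕ) (i : ℤ) {m : ℕ} (z : Fin m → ℝ × ℝ) (u : Fin m) :
    rmin R i m z u ≤ 3 * supMin R i m z u := by
  have hle := (sInf_dist_mem ((R : ℝ) ^ (-i)) (fun v => dist (eucl (z u)) (eucl (z v))) u).2
  rcases (sInf_dist_mem ((R : ℝ) ^ (-i)) (fun v => dist (z u) (z v)) u).1 with h | ⟨v, hv, h⟩
  · have h1 : rmin R i m z u ≤ (R : ℝ) ^ (-i) := hle (Or.inl rfl)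
    have h2 : supMin R i m z u = (R : ℝ) ^ (-i) := h
    have h3 : (0 : ℝ) ≤ (R : ℝ) ^ (-i) := by positivity
    linarith
  · have h1 : rmin R i m z u ≤ dist (eucl (z u)) (eucl (z v)) := hle (Or.inr ⟨v, hv, rfl⟩)
    have h2 : supMin R i m z u = dist (z u) (z v) := h
    rw [h2]
    exact h1.trans (dist_eucl_le _ _)

/-! ### The construction -/

/-- **disjoint-annuli construction.** Fix `R, m ∈ ℕ` (with
`R ≥ 2` and the lattice parameter `n ≥ 1`). There is a constant `C(R,m)` such
that for all integers `i ≤ j - 10` and all distinct tile centres `z₁,…,z_m`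
of the tiling of `B(0,R^(-i)/2)` by boxes of side `n⁻¹R^(κ-j)`, there exist
`n_u ∈ {1,…,m}` and radii `s_{u,l} < r_{u,l}` as in the statement such that
the annuli `A(z_u; s_{u,l}, r_{u,l})` are pairwise disjoint and the product
of their aspect ratios is bounded by
`C·∏_u 1/min(R^(-i), min_{v<u} |z_u - z_v|)`. -/
theorem disjoint_annuli_construction (R m : ℕ) (hR : 2 ≤ R) :
    ∃ C : ℝ, 0 < C ∧ ∀ n : ℕ, 1 ≤ n → ∀ i j : ℤ, i ≤ j - 10 →
      ∀ z : Fin m → ℝ × ℝ, (∀ u, z u ∈ tileCtrs R n i j) →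
        Function.Injective z →
        ∃ (nn : Fin m → ℕ) (s r : Fin m → ℕ → ℝ),
          (∀ u, 1 ≤ nn u ∧ nn u ≤ m) ∧
          (∀ u l, 1 ≤ l → l ≤ nn u - 1 →
            0 < s u l ∧ s u l < r u l ∧
              r u l ≤ (n : ℝ)⁻¹ * (R : ℝ) ^ ((kappa R n : ℤ) - i)) ∧
          (∀ u, s u (nn u) = 0 ∧
            (n : ℝ)⁻¹ * (R : ℝ) ^ ((kappa R n : ℤ) - j) / 2 ≤ r u (nn u)) ∧
          (∀ u u' : Fin m, ∀ l l' : ℕ, 1 ≤ l → l ≤ nn u → 1 ≤ l' → l' ≤ nn u' →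
            (u, l) ≠ (u', l') →
            Disjoint (annPts (z u) (s u l) (r u l))
              (annPts (z u') (s u' l') (r u' l'))) ∧
          (∏ u : Fin m, (∏ l ∈ Finset.Icc 1 (nn u - 1), s u l) /
              ∏ l ∈ Finset.Icc 1 (nn u), r u l) ≤
            C * ∏ u : Fin m, (rmin R i m z u)⁻¹ := by
  refine ⟨(6 * 3 ^ m) ^ m, by positivity, ?_⟩
  intro n hn i j _ z hz hinj
  have hρ : 0 < tileSide R n j := tileSide_pos hR hn j
  have hdle : ∀ u, supMin R i m z u ≤ (R : ℝ) ^ (-i) := fun u =>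
    (sInf_dist_mem ((R : ℝ) ^ (-i)) (fun v => dist (z u) (z v)) u).2 (Or.inl rfl)
  have hddist : ∀ u w, u < w → supMin R i m z w ≤ dist (z u) (z w) := fun u w h => by
    rw [dist_comm]
    exact (sInf_dist_mem ((R : ℝ) ^ (-i)) (fun v => dist (z w) (z v)) w).2 (Or.inr ⟨u, h, rfl⟩)
  have hρd : ∀ u, tileSide R n j ≤ supMin R i m z u := fun u => by
    rcases (sInf_dist_mem ((R : ℝ) ^ (-i)) (fun v => dist (z u) (z v)) u).1 with h | ⟨v, hv, h⟩
    · rw [supMin, Set.mem_singleton_iff.1 h]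
      exact tileSide_le_of_mem hρ (hz u)
    · rw [supMin, h]
      exact tileSide_le_dist hρ (hz u) (hz v) (hinj.ne hv.ne')
  -- At `z u`, remove the radii at which an annulus could meet the box of a later centre.
  have key := fun u : Fin m => excise_intervals (half_pos hρ)
    (fun w => dist (z u) (z w) - supMin R i m z w / 2)
    (fun w => dist (z u) (z w) + supMin R i m z w / 2) (Finset.Ioi u)
    (supMin R i m z u / 2) (by linarith [hρd u]) (by
      intro w hw
      have h1 := hddist u w (Finset.mem_Ioi.1 hw)
      have h2 := hρd w
      refine ⟨?_, ?_, ?_⟩ <;> linarith)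
  choose k hk s r hs hsn hrn hr hdec havoid hprod using key
  have hkm : ∀ u, k u + 1 ≤ m := fun u => by
    have h1 := hk u
    rw [Fin.card_Ioi] at h1
    have h2 := u.2
    omega
  -- The statement counts annuli from `1`, the interval lemma from `0`.
  refine ⟨fun u => k u + 1, fun u l => s u (l - 1), fun u l => r u (l - 1),
    fun u => ⟨Nat.le_add_left 1 _, hkm u⟩, ?_, ?_, ?_, ?_⟩
  · intro u l hl hl'
    have hl'' : l ≤ k u := by simpa using hl'
    obtain ⟨h1, h2⟩ := hs u (l - 1) (by omega)
    refine ⟨h1, h2, ?_⟩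
    have h3 := hr u (l - 1) (by omega)
    have h4 : (R : ℝ) ^ (-i) ≤ (n : ℝ)⁻¹ * (R : ℝ) ^ ((kappa R n : ℤ) - i) :=
      zpow_le_tileSide hR hn i
    linarith [hdle u, hρd u]
  · intro u
    exact ⟨hsn u, hrn u⟩
  · intro u u' l l' hl hlu hl' hlu' hne
    simp only at hlu hlu' ⊢
    rcases lt_trichotomy u u' with h | h | h
    · exact annPts_disjoint_of_avoid (hr u' (l' - 1) (by omega))
        (havoid u (l - 1) (by omega) u' (Finset.mem_Ioi.2 h))
    · subst h
      have hll : l ≠ l' := fun e => hne (by rw [e])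
      rcases Nat.lt_or_gt_of_ne hll with h' | h'
      · exact annPts_disjoint_of_le (hdec u (l - 1) (l' - 1) (by omega) (by omega))
      · exact (annPts_disjoint_of_le (hdec u (l' - 1) (l - 1) (by omega) (by omega))).symm
    · exact (annPts_disjoint_of_avoid (hr u (l - 1) (by omega))
        (havoid u' (l' - 1) (by omega) u (Finset.mem_Ioi.2 h))).symm
  · have hshift : ∀ (f : ℕ → ℝ) (N : ℕ),
        ∏ l ∈ Finset.Icc 1 N, f (l - 1) = ∏ l ∈ Finset.range N, f l := by
      intro f N
      rw [← Finset.Ico_add_one_right_eq_Icc, Finset.prod_Ico_eq_prod_range]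
      simp
    have hC : ((6 : ℝ) * 3 ^ m) ^ m = ∏ _u : Fin m, (6 * 3 ^ m : ℝ) := by simp
    rw [hC, ← Finset.prod_mul_distrib]
    refine Finset.prod_le_prod ?_ ?_
    · intro u _
      rw [hshift, hshift]
      simp only [Nat.add_sub_cancel]
      refine div_nonneg (Finset.prod_nonneg fun l hl => (hs u l (Finset.mem_range.1 hl)).1.le)
        (Finset.prod_nonneg fun l hl => ?_)
      rcases Nat.lt_succ_iff_lt_or_eq.1 (Finset.mem_range.1 hl) with h | h
      · exact ((hs u l h).1.trans (hs u l h).2).le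
      · rw [h]; linarith [hrn u]
    · intro u _
      rw [hshift, hshift]
      simp only [Nat.add_sub_cancel]
      refine (hprod u).trans ?_
      have hd : 0 < supMin R i m z u := hρ.trans_le (hρd u)
      have hrp := rmin_pos hR i hinj u
      have hcard : (3 : ℝ) ^ (Finset.Ioi u).card ≤ 3 ^ m :=
        pow_le_pow_right₀ (by norm_num) ((Finset.card_le_univ _).trans_eq (Fintype.card_fin m))
      rw [← div_eq_mul_inv, div_le_div_iff₀ (by positivity) hrp]
      calc (3 : ℝ) ^ (Finset.Ioi u).card * rmin R i m z u
          ≤ 3 ^ m * (3 * supMin R i m z u) := by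
            gcongr
            exact rmin_le_three_mul_supMin R i z u
        _ = 6 * 3 ^ m * (supMin R i m z u / 2) := by ring

end Perco
end
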